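/- Let C be a nodal curve with components C_1,…,C_p and marked smooth point σ(0). Fix (i,j,k) with i ≠ j and C_i ∩ C_j ≠ ∅. Then at most one tail in T²_{i,k} ∪ T²_{j,k} ∪ T³_{i,k} ∪ T³_{j,k} has a terminal point lying in C_i ∩ C_j; i.e., d_{T_{i,k} ∪ T_{j,k}, C_i ∩ C_j} ≤ 1, where for a set S of subcurves and a set N of nodes, d_{S,N} counts the tails W ∈ S with Term_W ∩ N ≠ ∅. -/

import Mathlib

open Finset

/-- A combinatorial model of a nodal curve: `V` is the set of irreducible
components, `N` the set of nodes, `ends e` the (one or two) components through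
the node `e`, `gen v` the geometric genus of the component `v`, and `base` the
component containing the marked smooth point `σ(0)`. -/
structure NodalGraph where
  V : Type
  N : Type
  [fV : Fintype V]
  [dV : DecidableEq V]
  [fN : Fintype N]
  [dN : DecidableEq N]
  ends : N → V × V
  gen : V → ℕ
  base : V

attribute [instance] NodalGraph.fV NodalGraph.dV NodalGraph.fN NodalGraph.dN

namespace NodalGraph

variable (G : NodalGraph)

/-- Two components are adjacent if some node lies on both. -/
def Adj (a b : G.V) : Prop := ∃ e, G.ends e = (a, b) ∨ G.ends e = (b, a)

/-- The set of terminal points of a subcurve `Z`, i.e. the nodes in `Z ∩ Zᶜ`. -/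
def Term (Z : Finset G.V) : Finset G.N :=
  univ.filter (fun e =>
    ((G.ends e).1 ∈ Z ∧ (G.ends e).2 ∉ Z) ∨ ((G.ends e).1 ∉ Z ∧ (G.ends e).2 ∈ Z))

/-- `k_Z`, the number of terminal points of `Z`. -/
def k (Z : Finset G.V) : ℕ := (G.Term Z).card

/-- A (nonempty) subcurve is connected. -/
def ConnSub (Z : Finset G.V) : Prop :=
  Z.Nonempty ∧ ∀ u ∈ Z, ∀ v ∈ Z,
    Relation.ReflTransGen (fun a b => a ∈ Z ∧ b ∈ Z ∧ G.Adj a b) u v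

/-- The whole curve is connected. -/
def Connected : Prop := G.ConnSub univ

/-- A tail: a proper subcurve `Z` with both `Z` and `Zᶜ` connected. -/
def IsTail (Z : Finset G.V) : Prop := Z ≠ univ ∧ G.ConnSub Z ∧ G.ConnSub Zᶜ

/-- A `m`-tail: a tail with `k_Z = m`. -/
def IsKTail (Z : Finset G.V) (m : ℕ) : Prop := G.IsTail Z ∧ G.k Z = m

/-- The node `e` lies on the component `v`. -/
def onComp (e : G.N) (v : G.V) : Prop := (G.ends e).1 = v ∨ (G.ends e).2 = v

/-- The node `e`, as a point of the curve, lies on the subcurve `Z`. -/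
def nodeOn (e : G.N) (Z : Finset G.V) : Prop := (G.ends e).1 ∈ Z ∨ (G.ends e).2 ∈ Z

/-- The subcurve `Z` crosses the node `e`: both branches of `e` lie in `Z`. -/
def crosses (Z : Finset G.V) (e : G.N) : Prop := (G.ends e).1 ∈ Z ∧ (G.ends e).2 ∈ Z

/-- `Z ≺ Z'`: strict inclusion with disjoint terminal points. -/
def prec (Z Z' : Finset G.V) : Prop := Z ⊂ Z' ∧ G.Term Z ∩ G.Term Z' = ∅

/-- The pair `(Z, Z')` is free: disjoint terminal points. -/
def free (Z Z' : Finset G.V) : Prop := G.Term Z ∩ G.Term Z' = ∅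

/-- The pair `(Z, Z')` is perfect. -/
def perfect (Z Z' : Finset G.V) : Prop := Z ⊆ Z' ∨ Z' ⊆ Z ∨ Zᶜ ⊆ Z' ∨ Z' ⊆ Zᶜ

/-- `T¹_γ`: the nested set of 1-tails containing `C_γ` and avoiding `σ(0)`. -/
def T1 (γ : G.V) : Set (Finset G.V) := { Z | G.IsKTail Z 1 ∧ γ ∈ Z ∧ G.base ∉ Z }

/-- The defining condition for the 2-tails entering `T²_{γ,γ'}`. -/
def cond2 (γ γ' : G.V) (Z : Finset G.V) : Prop :=
  G.IsKTail Z 2 ∧ γ ∈ Z ∧ γ' ∈ Z ∧ G.base ∉ Z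

/-- `W 0 ≺ W 1 ≺ ⋯ ≺ W (M-1)` is the nested set `T²_{γ,γ'}` of 2-tails:
each `W t` is minimal among the 2-tails `Z ⊇ C_γ ∪ C_γ'` with `σ(0) ∈ Zᶜ`
and `W (t-1) ≺ Z` (starting from `W_{-1} = ∅`), and the chain is maximal. -/
def IsNested2 (γ γ' : G.V) (M : ℕ) (W : ℕ → Finset G.V) : Prop :=
  (∀ t < M, Minimal (fun Z => G.cond2 γ γ' Z ∧ G.prec (if t = 0 then ∅ else W (t - 1)) Z) (W t)) ∧
  ¬ ∃ Z, G.cond2 γ γ' Z ∧ G.prec (if M = 0 then ∅ else W (M - 1)) Z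

/-- The set underlying a finite chain `W 0, …, W (M-1)`. -/
def chainSet (M : ℕ) (W : ℕ → Finset G.V) : Set (Finset G.V) := { Z | ∃ t < M, W t = Z }

/-- The defining condition for the 3-tails entering `T³_{γ,γ'}`:
3-tails that are moreover free with respect to every member of `T²_{γ,γ'}`. -/
def cond3 (γ γ' : G.V) (T2 : Set (Finset G.V)) (Z : Finset G.V) : Prop :=
  G.IsKTail Z 3 ∧ γ ∈ Z ∧ γ' ∈ Z ∧ G.base ∉ Z ∧ ∀ W ∈ T2, G.free Z W

/-- `W 0 ≺ ⋯ ≺ W (M-1)` is the nested set `T³_{γ,γ'}` of 3-tails (relative to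
the set `T2` of nested 2-tails). -/
def IsNested3 (γ γ' : G.V) (T2 : Set (Finset G.V)) (M : ℕ) (W : ℕ → Finset G.V) : Prop :=
  (∀ t < M, Minimal (fun Z => G.cond3 γ γ' T2 Z ∧ G.prec (if t = 0 then ∅ else W (t - 1)) Z) (W t)) ∧
  ¬ ∃ Z, G.cond3 γ γ' T2 Z ∧ G.prec (if M = 0 then ∅ else W (M - 1)) Z

end NodalGraph

/-!
Let `X` and `Y` be two distinct tails of the union. A tail containing `C_i` that ends at one node
of `C_i ∩ C_j` omits `C_j`, hence ends at all of them; so two members of `T²_{i,k} ∪ T³_{i,k}`,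
which share no terminal point, cannot both do so. If `X ⊇ C_i ∪ C_k` and `Y ⊇ C_j ∪ C_k` both end
there, then `X` omits `C_j`, `Y` omits `C_i`, and the nodes of `C_i ∩ C_j` join `X \ Y` to
`Y \ X`. Then `k_X + k_Y = k_{X ∩ Y} + k_{X ∪ Y} + 2 |(X \ Y) ∩ (Y \ X)| ≥ 2 + 2 + 2`, so `X`
and `Y` are 3-tails and `X ∪ Y` is a 2-tail. As `X` and `Y` are free from `T²_{i,k}` and
`T²_{j,k}`, all members of these sets contain `C_i ∪ C_j ∪ C_k`; since a minimal 2-tail above a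
given one is the least one, the two sets agree. So `X ∪ Y` is free from all of `T²_{i,k}`,
hence `≺`-above all of it by leastness, against the maximality of that chain.
-/

namespace NodalGraph

variable {G : NodalGraph} {A B C X Y Z : Finset G.V} {e : G.N} {i j k : G.V}

/-- The nodes with one branch in `A` and the other one in `B`. For disjoint subcurves these are
the points of `A ∩ B`. -/
def nodesBetween (G : NodalGraph) (A B : Finset G.V) : Finset G.N :=
  univ.filter (fun e =>
    ((G.ends e).1 ∈ A ∧ (G.ends e).2 ∈ B) ∨ ((G.ends e).1 ∈ B ∧ (G.ends e).2 ∈ A))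

lemma mem_nodesBetween : e ∈ G.nodesBetween A B ↔
    ((G.ends e).1 ∈ A ∧ (G.ends e).2 ∈ B) ∨ ((G.ends e).1 ∈ B ∧ (G.ends e).2 ∈ A) := by
  simp only [nodesBetween, mem_filter, mem_univ, true_and]

lemma mem_Term : e ∈ G.Term Z ↔
    ((G.ends e).1 ∈ Z ∧ (G.ends e).2 ∉ Z) ∨ ((G.ends e).1 ∉ Z ∧ (G.ends e).2 ∈ Z) := by
  simp only [Term, mem_filter, mem_univ, true_and]

lemma nodesBetween_comm (A B : Finset G.V) : G.nodesBetween A B = G.nodesBetween B A := by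
  ext e
  simp only [mem_nodesBetween, or_comm]

lemma nodesBetween_mono_right (h : B ⊆ C) : G.nodesBetween A B ⊆ G.nodesBetween A C := by
  intro e
  simp only [mem_nodesBetween]
  grind

lemma nodesBetween_union_right (A B C : Finset G.V) :
    G.nodesBetween A (B ∪ C) = G.nodesBetween A B ∪ G.nodesBetween A C := by
  ext e
  simp only [mem_nodesBetween, mem_union]
  tauto

lemma disjoint_nodesBetween (hAB : Disjoint A B) (hAC : Disjoint A C) (hBC : Disjoint B C) :
    Disjoint (G.nodesBetween A B) (G.nodesBetween A C) := by
  simp only [disjoint_left, mem_nodesBetween] at *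
  grind

lemma card_nodesBetween_union_right (hAB : Disjoint A B) (hAC : Disjoint A C)
    (hBC : Disjoint B C) :
    #(G.nodesBetween A (B ∪ C)) = #(G.nodesBetween A B) + #(G.nodesBetween A C) := by
  rw [nodesBetween_union_right, card_union_of_disjoint (disjoint_nodesBetween hAB hAC hBC)]

lemma Term_eq_nodesBetween_compl (Z : Finset G.V) : G.Term Z = G.nodesBetween Z Zᶜ := by
  ext e
  simp only [mem_Term, mem_nodesBetween, mem_compl]

lemma Term_compl (Z : Finset G.V) : G.Term Zᶜ = G.Term Z := by
  rw [Term_eq_nodesBetween_compl, Term_eq_nodesBetween_compl, compl_compl, nodesBetween_comm]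

lemma k_compl (Z : Finset G.V) : G.k Zᶜ = G.k Z := by
  rw [NodalGraph.k, NodalGraph.k, Term_compl]

lemma Term_empty : G.Term ∅ = ∅ := by
  simp [Term]

lemma Term_inter_subset (X Y : Finset G.V) : G.Term (X ∩ Y) ⊆ G.Term X ∪ G.Term Y := by
  intro e
  simp only [mem_Term, mem_union, mem_inter]
  tauto

lemma Term_union_subset (X Y : Finset G.V) : G.Term (X ∪ Y) ⊆ G.Term X ∪ G.Term Y := by
  intro e
  simp only [mem_Term, mem_union]
  tauto

lemma Term_inter_Term_subset (hXY : X ⊆ Y) (hYZ : Y ⊆ Z) :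
    G.Term X ∩ G.Term Z ⊆ G.Term Y := by
  intro e
  simp only [mem_Term, mem_inter]
  grind

lemma mem_Term_iff_of_onComp (hij : i ≠ j) (hei : G.onComp e i) (hej : G.onComp e j)
    (hi : i ∈ Z) : e ∈ G.Term Z ↔ j ∉ Z := by
  rw [mem_Term]
  unfold onComp at hei hej
  grind

lemma mem_nodesBetween_of_onComp (hij : i ≠ j) (hei : G.onComp e i) (hej : G.onComp e j)
    (hi : i ∈ A) (hj : j ∈ B) : e ∈ G.nodesBetween A B := by
  rw [mem_nodesBetween]
  unfold onComp at hei hej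
  grind

lemma k_add_k (X Y : Finset G.V) :
    G.k X + G.k Y = G.k (X ∩ Y) + G.k (X ∪ Y) + 2 * #(G.nodesBetween (X \ Y) (Y \ X)) := by
  simp only [NodalGraph.k, Term, nodesBetween, card_filter, mul_sum, ← sum_add_distrib]
  refine sum_congr rfl fun e _ => ?_
  by_cases h₁ : (G.ends e).1 ∈ X <;> by_cases h₂ : (G.ends e).1 ∈ Y <;>
  by_cases h₃ : (G.ends e).2 ∈ X <;> by_cases h₄ : (G.ends e).2 ∈ Y <;>
  simp [h₁, h₂, h₃, h₄]

lemma card_nodesBetween_add_le_k (hZA : Disjoint Z A) (hZB : Disjoint Z B)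
    (hAB : Disjoint A B) : #(G.nodesBetween Z A) + #(G.nodesBetween Z B) ≤ G.k Z := by
  rw [← card_nodesBetween_union_right hZA hZB hAB, NodalGraph.k, Term_eq_nodesBetween_compl]
  exact card_le_card (nodesBetween_mono_right
    (subset_compl_iff_disjoint_left.mpr (disjoint_union_right.mpr ⟨hZA, hZB⟩)))

/-! ### Connected subcurves -/

lemma nodesBetween_nonempty_iff :
    (G.nodesBetween A B).Nonempty ↔ ∃ a ∈ A, ∃ b ∈ B, G.Adj a b := by
  simp only [Finset.Nonempty, mem_nodesBetween, Adj]
  constructor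
  · rintro ⟨e, ⟨ha, hb⟩ | ⟨hb, ha⟩⟩
    · exact ⟨_, ha, _, hb, e, Or.inl rfl⟩
    · exact ⟨_, ha, _, hb, e, Or.inr rfl⟩
  · rintro ⟨a, ha, b, hb, e, he | he⟩
    · exact ⟨e, Or.inl (by simp [he, ha, hb])⟩
    · exact ⟨e, Or.inr (by simp [he, ha, hb])⟩

lemma ConnSub.nodesBetween_sdiff_nonempty (hZ : G.ConnSub Z) (hA : A.Nonempty) (hAZ : A ⊂ Z) :
    (G.nodesBetween A (Z \ A)).Nonempty := by
  obtain ⟨u, hu⟩ := hA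
  obtain ⟨v, hvZ, hvA⟩ := exists_of_ssubset hAZ
  have huv := hZ.2 u (hAZ.1 hu) v hvZ
  by_contra hno
  refine hvA ?_
  clear hvZ hvA
  induction huv with
  | refl => exact hu
  | @tail a b _ hab ih =>
    by_contra hb
    exact hno (nodesBetween_nonempty_iff.mpr
      ⟨a, ih, b, mem_sdiff.mpr ⟨hab.2.1, hb⟩, hab.2.2⟩)

lemma connSub_of_forall_nodesBetween_sdiff_nonempty (hZ : Z.Nonempty)
    (hcut : ∀ A ⊂ Z, A.Nonempty → (G.nodesBetween A (Z \ A)).Nonempty) : G.ConnSub Z := by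
  classical
  refine ⟨hZ, fun u hu v hv => ?_⟩
  by_contra huv
  set A := Z.filter (Relation.ReflTransGen (fun a b => a ∈ Z ∧ b ∈ Z ∧ G.Adj a b) u)
  have huA : u ∈ A := mem_filter.mpr ⟨hu, .refl⟩
  have hAZ : A ⊂ Z := filter_ssubset.mpr ⟨v, hv, huv⟩
  obtain ⟨a, ha, b, hb, hab⟩ := nodesBetween_nonempty_iff.mp (hcut A hAZ ⟨u, huA⟩)
  obtain ⟨haZ, hua⟩ := mem_filter.mp ha
  obtain ⟨hbZ, hbA⟩ := mem_sdiff.mp hb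
  exact hbA (mem_filter.mpr ⟨hbZ, hua.tail ⟨haZ, hbZ, hab⟩⟩)

lemma ConnSub.union (hX : G.ConnSub X) (hY : G.ConnSub Y) (hXY : (X ∩ Y).Nonempty) :
    G.ConnSub (X ∪ Y) := by
  obtain ⟨c, hc⟩ := hXY
  obtain ⟨hcX, hcY⟩ := mem_inter.mp hc
  have hXmono := Relation.ReflTransGen.mono (fun a b (h : a ∈ X ∧ b ∈ X ∧ G.Adj a b) =>
    (⟨mem_union_left Y h.1, mem_union_left Y h.2.1, h.2.2⟩ :
      a ∈ X ∪ Y ∧ b ∈ X ∪ Y ∧ G.Adj a b))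
  have hYmono := Relation.ReflTransGen.mono (fun a b (h : a ∈ Y ∧ b ∈ Y ∧ G.Adj a b) =>
    (⟨mem_union_right X h.1, mem_union_right X h.2.1, h.2.2⟩ :
      a ∈ X ∪ Y ∧ b ∈ X ∪ Y ∧ G.Adj a b))
  refine ⟨⟨c, mem_union_left Y hcX⟩, fun u hu v hv => ?_⟩
  trans c
  · rcases mem_union.mp hu with hu | hu
    · exact hXmono _ _ (hX.2 u hu c hcX)
    · exact hYmono _ _ (hY.2 u hu c hcY)
  · rcases mem_union.mp hv with hv | hv
    · exact hXmono _ _ (hX.2 c hcX v hv)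
    · exact hYmono _ _ (hY.2 c hcY v hv)

lemma ConnSub.of_card_nodesBetween_sdiff_le_one (hZ : G.ConnSub Z) (hA : A.Nonempty)
    (hAZ : A ⊆ Z) (hcard : #(G.nodesBetween A (Z \ A)) ≤ 1) : G.ConnSub A := by
  -- If `A` splits into `B` and `A \ B`, then each of them has its own node to `Z \ A`.
  refine connSub_of_forall_nodesBetween_sdiff_nonempty hA fun B hBA hB => ?_
  by_contra hsplit
  rw [not_nonempty_iff_eq_empty] at hsplit
  have exits : ∀ D ⊂ A, D.Nonempty → G.nodesBetween D (A \ D) = ∅ →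
      1 ≤ #(G.nodesBetween (Z \ A) D) := by
    intro D hDA hD hDsplit
    have hexit := hZ.nodesBetween_sdiff_nonempty hD (hDA.trans_subset hAZ)
    have hZD : Z \ D = (A \ D) ∪ (Z \ A) := by grind
    rwa [hZD, nodesBetween_union_right, hDsplit, empty_union, nodesBetween_comm,
      ← card_pos] at hexit
  have hexitB : 1 ≤ #(G.nodesBetween (Z \ A) B) := exits B hBA hB hsplit
  have hexitC : 1 ≤ #(G.nodesBetween (Z \ A) (A \ B)) :=
    exits (A \ B) (sdiff_ssubset hBA.1 hB) (sdiff_nonempty.mpr hBA.2)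
      (by rwa [Finset.sdiff_sdiff_eq_self hBA.1, nodesBetween_comm])
  have hsum : #(G.nodesBetween (Z \ A) A) =
      #(G.nodesBetween (Z \ A) B) + #(G.nodesBetween (Z \ A) (A \ B)) := by
    rw [← card_nodesBetween_union_right (sdiff_disjoint.mono_right hBA.1)
      (sdiff_disjoint.mono_right sdiff_subset) disjoint_sdiff, union_sdiff_of_subset hBA.1]
  rw [nodesBetween_comm] at hcard
  omega

/-! ### Crossing tails -/

lemma ConnSub.nodesBetween_inter_sdiff_nonempty (hX : G.ConnSub X) (hXY : (X ∩ Y).Nonempty)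
    (hsub : ¬ X ⊆ Y) : (G.nodesBetween (X ∩ Y) (X \ Y)).Nonempty := by
  rw [← sdiff_inter_self_left]
  exact hX.nodesBetween_sdiff_nonempty hXY
    (inter_subset_left.ssubset_of_ne (mt inter_eq_left.mp hsub))

lemma card_nodesBetween_inter_sdiff_add_le_k (X Y : Finset G.V) :
    #(G.nodesBetween (X ∩ Y) (X \ Y)) + #(G.nodesBetween (X ∩ Y) (Y \ X)) ≤ G.k (X ∩ Y) := by
  apply card_nodesBetween_add_le_k <;> grind [disjoint_left]

lemma ConnSub.two_le_k_inter (hX : G.ConnSub X) (hY : G.ConnSub Y) (hXY : (X ∩ Y).Nonempty)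
    (hnXY : ¬ X ⊆ Y) (hnYX : ¬ Y ⊆ X) : 2 ≤ G.k (X ∩ Y) := by
  have hX' := (hX.nodesBetween_inter_sdiff_nonempty hXY hnXY).card_pos
  have hY' := (hY.nodesBetween_inter_sdiff_nonempty (inter_comm X Y ▸ hXY) hnYX).card_pos
  rw [inter_comm] at hY'
  have := card_nodesBetween_inter_sdiff_add_le_k X Y
  omega

lemma ConnSub.inter (hX : G.ConnSub X) (hY : G.ConnSub Y) (hXY : (X ∩ Y).Nonempty)
    (hnYX : ¬ Y ⊆ X) (hk : G.k (X ∩ Y) ≤ 2) : G.ConnSub (X ∩ Y) := by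
  refine hX.of_card_nodesBetween_sdiff_le_one hXY inter_subset_left ?_
  have hY' := (hY.nodesBetween_inter_sdiff_nonempty (inter_comm X Y ▸ hXY) hnYX).card_pos
  rw [inter_comm] at hY'
  have := card_nodesBetween_inter_sdiff_add_le_k X Y
  rw [sdiff_inter_self_left]
  omega

lemma isTail_iff : G.IsTail Z ↔ G.ConnSub Z ∧ G.ConnSub Zᶜ :=
  ⟨And.right, fun h => ⟨fun hZ => by simpa [hZ] using h.2.1, h⟩⟩

lemma IsTail.compl (hZ : G.IsTail Z) : G.IsTail Zᶜ :=
  isTail_iff.mpr ⟨hZ.2.2, by simpa only [compl_compl] using hZ.2.1⟩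

lemma IsTail.inter (hX : G.IsTail X) (hY : G.IsTail Y) (hXY : (X ∩ Y).Nonempty)
    (hXYc : (Xᶜ ∩ Yᶜ).Nonempty) (hnYX : ¬ Y ⊆ X) (hk : G.k (X ∩ Y) ≤ 2) :
    G.IsTail (X ∩ Y) :=
  isTail_iff.mpr ⟨hX.2.1.inter hY.2.1 hXY hnYX hk, compl_inter X Y ▸ hX.2.2.union hY.2.2 hXYc⟩

lemma IsTail.two_le_k_union (hX : G.IsTail X) (hY : G.IsTail Y)
    (hXYc : (Xᶜ ∩ Yᶜ).Nonempty) (hnXY : ¬ X ⊆ Y) (hnYX : ¬ Y ⊆ X) : 2 ≤ G.k (X ∪ Y) := by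
  rw [← k_compl, compl_union]
  exact hX.2.2.two_le_k_inter hY.2.2 hXYc (mt compl_subset_compl.mp hnYX)
    (mt compl_subset_compl.mp hnXY)

lemma IsTail.union (hX : G.IsTail X) (hY : G.IsTail Y) (hXY : (X ∩ Y).Nonempty)
    (hXYc : (Xᶜ ∩ Yᶜ).Nonempty) (hnXY : ¬ X ⊆ Y) (hk : G.k (X ∪ Y) ≤ 2) :
    G.IsTail (X ∪ Y) := by
  rw [← k_compl, compl_union] at hk
  simpa only [compl_inter, compl_compl] using
    (hX.compl.inter hY.compl hXYc (by simpa only [compl_compl]) (mt compl_subset_compl.mp hnXY)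
      hk).compl

lemma IsTail.isKTail_union_of_k_le_three (hX : G.IsTail X) (hY : G.IsTail Y)
    (hXY : (X ∩ Y).Nonempty) (hXYc : (Xᶜ ∩ Yᶜ).Nonempty)
    (hjoin : (G.nodesBetween (X \ Y) (Y \ X)).Nonempty) (hkX : G.k X ≤ 3) (hkY : G.k Y ≤ 3) :
    G.k X = 3 ∧ G.k Y = 3 ∧ G.IsKTail (X ∪ Y) 2 := by
  obtain ⟨a, ha, b, hb, _⟩ := nodesBetween_nonempty_iff.mp hjoin
  have hnXY : ¬ X ⊆ Y := sdiff_nonempty.mp ⟨a, ha⟩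
  have hnYX : ¬ Y ⊆ X := sdiff_nonempty.mp ⟨b, hb⟩
  have hsum := k_add_k X Y
  have hinter := hX.2.1.two_le_k_inter hY.2.1 hXY hnXY hnYX
  have hunion := hX.two_le_k_union hY hXYc hnXY hnYX
  have hjoin' := hjoin.card_pos
  exact ⟨by omega, by omega, hX.union hY hXY hXYc hnXY (by omega), by omega⟩

lemma infClosed_cond2 (i k : G.V) : InfClosed {Z | G.cond2 i k Z} := by
  rintro X ⟨hX, hiX, hkX, hbX⟩ Y ⟨hY, hiY, hkY, hbY⟩
  by_cases hXY : X ⊆ Y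
  · rw [inf_eq_left.mpr hXY]
    exact ⟨hX, hiX, hkX, hbX⟩
  by_cases hYX : Y ⊆ X
  · rw [inf_eq_right.mpr hYX]
    exact ⟨hY, hiY, hkY, hbY⟩
  have hmeet : (X ∩ Y).Nonempty := ⟨i, mem_inter.mpr ⟨hiX, hiY⟩⟩
  have hmeetc : (Xᶜ ∩ Yᶜ).Nonempty := ⟨G.base, by simp [hbX, hbY]⟩
  have hkXY : G.k (X ∩ Y) = 2 := by
    have hsum := k_add_k X Y
    have hinter := hX.1.2.1.two_le_k_inter hY.1.2.1 hmeet hXY hYX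
    have hunion := hX.1.two_le_k_union hY.1 hmeetc hXY hYX
    rw [hX.2, hY.2] at hsum
    omega
  exact ⟨⟨hX.1.inter hY.1 hmeet hmeetc hYX hkXY.le, hkXY⟩, mem_inter.mpr ⟨hiX, hiY⟩,
    mem_inter.mpr ⟨hkX, hkY⟩, fun hb => hbX (mem_inter.mp hb).1⟩

/-! ### Greedy chains -/

lemma free_iff_disjoint : G.free X Y ↔ Disjoint (G.Term X) (G.Term Y) :=
  disjoint_iff_inter_eq_empty.symm

lemma free.symm (h : G.free X Y) : G.free Y X :=
  free_iff_disjoint.mpr (free_iff_disjoint.mp h).symm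

lemma free.inter_right (hY : G.free X Y) (hZ : G.free X Z) : G.free X (Y ∩ Z) := by
  rw [free_iff_disjoint] at *
  exact (disjoint_union_right.mpr ⟨hY, hZ⟩).mono_right (Term_inter_subset Y Z)

lemma free.union_right (hY : G.free X Y) (hZ : G.free X Z) : G.free X (Y ∪ Z) := by
  rw [free_iff_disjoint] at *
  exact (disjoint_union_right.mpr ⟨hY, hZ⟩).mono_right (Term_union_subset Y Z)

lemma free_empty_left (Z : Finset G.V) : G.free ∅ Z := by
  rw [free, Term_empty, empty_inter]

lemma mem_of_free_of_onComp (hij : i ≠ j) (hei : G.onComp e i) (hej : G.onComp e j)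
    (hiX : i ∈ X) (hjX : j ∉ X) (hfree : G.free X Z) (hiZ : i ∈ Z) : j ∈ Z := by
  by_contra hjZ
  exact disjoint_left.mp (free_iff_disjoint.mp hfree)
    ((mem_Term_iff_of_onComp hij hei hej hiX).mpr hjX)
    ((mem_Term_iff_of_onComp hij hei hej hiZ).mpr hjZ)

lemma prec_of_subset_of_free (hsub : X ⊆ Y) (hfree : G.free X Y) (hY : (G.Term Y).Nonempty) :
    G.prec X Y := by
  refine ⟨ssubset_of_subset_of_ne hsub ?_, hfree⟩
  rintro rfl
  exact hY.ne_empty (by rwa [free, inter_self] at hfree)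

lemma prec.trans (hXY : G.prec X Y) (hYZ : G.prec Y Z) : G.prec X Z := by
  refine ⟨hXY.1.trans hYZ.1, ?_⟩
  have hY := Term_inter_Term_subset hXY.1.1 hYZ.1.1
  rw [← subset_empty, ← hXY.2]
  exact subset_inter inter_subset_left hY

/-- The chain `W 0 ≺ ⋯ ≺ W (M - 1)` is built greedily from the subcurves satisfying `P`: each
term is minimal among those lying `≺`-above the previous one (above `∅` at the start), until none
is left. The nested sets `T²` and `T³` are such chains. -/
def IsGreedyChain (G : NodalGraph) (P : Finset G.V → Prop) (M : ℕ) (W : ℕ → Finset G.V) : Prop :=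
  (∀ t < M, Minimal (fun Z => P Z ∧ G.prec (if t = 0 then ∅ else W (t - 1)) Z) (W t)) ∧
  ¬ ∃ Z, P Z ∧ G.prec (if M = 0 then ∅ else W (M - 1)) Z

section GreedyChain

variable {P Q : Finset G.V → Prop} {M M' t : ℕ} {W W' : ℕ → Finset G.V}

lemma IsNested2.isGreedyChain (h : G.IsNested2 i k M W) : G.IsGreedyChain (G.cond2 i k) M W := h

lemma IsNested3.isGreedyChain {T2 : Set (Finset G.V)} (h : G.IsNested3 i k T2 M W) :
    G.IsGreedyChain (G.cond3 i k T2) M W := h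

lemma IsGreedyChain.of_mem_chainSet (h : G.IsGreedyChain P M W) (hZ : Z ∈ G.chainSet M W) :
    P Z := by
  obtain ⟨t, ht, rfl⟩ := hZ
  exact (h.1 t ht).1.1

lemma IsGreedyChain.prec_of_lt (h : G.IsGreedyChain P M W) {s : ℕ} (hst : s < t) (ht : t < M) :
    G.prec (W s) (W t) := by
  induction t, hst using Nat.le_induction with
  | base => exact (h.1 (s + 1) ht).1.2
  | succ t _ ih => exact (ih (by omega)).trans (h.1 (t + 1) ht).1.2

lemma IsGreedyChain.pairwise_free (h : G.IsGreedyChain P M W) :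
    (G.chainSet M W).Pairwise G.free := by
  rintro _ ⟨s, hs, rfl⟩ _ ⟨t, ht, rfl⟩ hne
  rcases lt_or_gt_of_ne (ne_of_apply_ne W hne) with hst | hts
  · exact (h.prec_of_lt hst ht).2
  · exact free.symm (h.prec_of_lt hts hs).2

lemma infClosed_and_prec (hP : InfClosed {Z | P Z}) (hTerm : ∀ Z, P Z → (G.Term Z).Nonempty)
    (B : Finset G.V) : InfClosed {Z | P Z ∧ G.prec B Z} := by
  rintro X ⟨hPX, hBX⟩ Y ⟨hPY, hBY⟩
  have hPXY : P (X ∩ Y) := hP hPX hPY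
  exact ⟨hPXY, prec_of_subset_of_free (subset_inter hBX.1.1 hBY.1.1)
    (free.inter_right hBX.2 hBY.2) (hTerm _ hPXY)⟩

lemma IsGreedyChain.isLeast (h : G.IsGreedyChain P M W) (hP : InfClosed {Z | P Z})
    (hTerm : ∀ Z, P Z → (G.Term Z).Nonempty) (ht : t < M) :
    IsLeast {Z | P Z ∧ G.prec (if t = 0 then ∅ else W (t - 1)) Z} (W t) :=
  (infClosed_and_prec hP hTerm _).codirectedOn.minimal_iff_isLeast.mp (h.1 t ht)

lemma IsGreedyChain.exists_not_free (h : G.IsGreedyChain P M W) (hP : InfClosed {Z | P Z})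
    (hTerm : ∀ Z, P Z → (G.Term Z).Nonempty) (hZ : P Z) :
    ∃ V ∈ G.chainSet M W, ¬ G.free V Z := by
  by_contra! hfree
  have hbelow : ∀ t ≤ M, G.prec (if t = 0 then ∅ else W (t - 1)) Z := by
    intro t ht
    induction t with
    | zero => exact prec_of_subset_of_free (empty_subset Z) (free_empty_left Z) (hTerm Z hZ)
    | succ t ih =>
      have hsub : W t ⊆ Z := (h.isLeast hP hTerm ht).2 ⟨hZ, ih (by omega)⟩
      exact prec_of_subset_of_free hsub (hfree (W t) ⟨t, ht, rfl⟩) (hTerm Z hZ)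
  exact h.2 ⟨Z, hZ, hbelow M le_rfl⟩

lemma IsGreedyChain.chainSet_subset (h : G.IsGreedyChain P M W) (h' : G.IsGreedyChain Q M' W')
    (hP : InfClosed {Z | P Z}) (hQ : InfClosed {Z | Q Z})
    (hPTerm : ∀ Z, P Z → (G.Term Z).Nonempty) (hQTerm : ∀ Z, Q Z → (G.Term Z).Nonempty)
    (hWQ : ∀ Z ∈ G.chainSet M W, Q Z) (hWP : ∀ Z ∈ G.chainSet M' W', P Z) :
    G.chainSet M W ⊆ G.chainSet M' W' := by
  have hagree : ∀ t < M, t < M' ∧ W t = W' t := by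
    intro t ht
    induction t using Nat.strong_induction_on with
    | _ t ih =>
      have hprev : (if t = 0 then ∅ else W (t - 1)) = (if t = 0 then ∅ else W' (t - 1)) := by
        grind
      have hle : t ≤ M' := by grind
      have hleast := h.isLeast hP hPTerm ht
      rw [hprev] at hleast
      have hQW : Q (W t) := hWQ (W t) ⟨t, ht, rfl⟩
      have ht' : t < M' := by
        refine hle.lt_of_ne fun htM => h'.2 ⟨W t, hQW, ?_⟩
        rw [← htM]
        exact hleast.1.2
      have hleast' := h'.isLeast hQ hQTerm ht'
      have hPW' : P (W' t) := hWP (W' t) ⟨t, ht', rfl⟩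
      exact ⟨ht', (hleast.2 ⟨hPW', hleast'.1.2⟩).antisymm (hleast'.2 ⟨hQW, hleast.1.2⟩)⟩
  rintro _ ⟨t, ht, rfl⟩
  obtain ⟨ht', hW⟩ := hagree t ht
  exact ⟨t, ht', hW.symm⟩

end GreedyChain

/-! ### Tails separating two components -/

/-- The tails from which `T²_{γ,γ'} ∪ T³_{γ,γ'}` is chosen, for `T2 = T²_{γ,γ'}`. -/
def cond23 (G : NodalGraph) (γ γ' : G.V) (T2 : Set (Finset G.V)) (Z : Finset G.V) : Prop :=
  G.cond2 γ γ' Z ∨ G.cond3 γ γ' T2 Z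

section Cond23

variable {T2 : Set (Finset G.V)}

lemma cond2.Term_nonempty (hZ : G.cond2 i k Z) : (G.Term Z).Nonempty :=
  card_ne_zero.mp (hZ.1.2.trans_ne two_ne_zero)

lemma cond23.isTail (hZ : G.cond23 i k T2 Z) : G.IsTail Z := by
  rcases hZ with hZ | hZ <;> exact hZ.1.1

lemma cond23.k_le_three (hZ : G.cond23 i k T2 Z) : G.k Z ≤ 3 := by
  rcases hZ with hZ | hZ <;> simp [hZ.1.2]

lemma cond23.left_mem (hZ : G.cond23 i k T2 Z) : i ∈ Z := by
  rcases hZ with hZ | hZ <;> exact hZ.2.1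

lemma cond23.right_mem (hZ : G.cond23 i k T2 Z) : k ∈ Z := by
  rcases hZ with hZ | hZ <;> exact hZ.2.2.1

lemma cond23.base_notMem (hZ : G.cond23 i k T2 Z) : G.base ∉ Z := by
  rcases hZ with hZ | hZ
  · exact hZ.2.2.2
  · exact hZ.2.2.2.1

lemma cond23.free_of_k_eq_three (hZ : G.cond23 i k T2 Z) (hk : G.k Z = 3) :
    ∀ V ∈ T2, G.free Z V := by
  rcases hZ with hZ | hZ
  · exact absurd (hk.symm.trans hZ.1.2) (by decide)
  · exact hZ.2.2.2.2

end Cond23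

section Meet

variable {M2 M3 M2i M2j : ℕ} {W2 W3 W2i W2j : ℕ → Finset G.V}

lemma IsNested2.cond23_of_mem (h2 : G.IsNested2 i k M2 W2)
    (h3 : G.IsNested3 i k (G.chainSet M2 W2) M3 W3) :
    ∀ Z ∈ G.chainSet M2 W2 ∪ G.chainSet M3 W3, G.cond23 i k (G.chainSet M2 W2) Z :=
  fun _ hZ => hZ.imp h2.isGreedyChain.of_mem_chainSet h3.isGreedyChain.of_mem_chainSet

lemma IsNested2.pairwise_free_union
    (h2 : G.IsNested2 i k M2 W2) (h3 : G.IsNested3 i k (G.chainSet M2 W2) M3 W3) :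
    (G.chainSet M2 W2 ∪ G.chainSet M3 W3).Pairwise G.free := by
  refine Set.pairwise_union.mpr
    ⟨h2.isGreedyChain.pairwise_free, h3.isGreedyChain.pairwise_free, fun V hV Z hZ _ => ?_⟩
  have hfree : G.free Z V := (h3.isGreedyChain.of_mem_chainSet hZ).2.2.2.2 V hV
  exact ⟨hfree.symm, hfree⟩

lemma cond2_of_mem_chainSet_of_free (hij : i ≠ j) (hei : G.onComp e i) (hej : G.onComp e j)
    (h2i : G.IsNested2 i k M2i W2i) (hiX : i ∈ X) (hjX : j ∉ X)
    (hfree : ∀ V ∈ G.chainSet M2i W2i, G.free X V) :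
    ∀ V ∈ G.chainSet M2i W2i, G.cond2 j k V := by
  intro V hV
  obtain ⟨hV2, hiV, hkV, hbV⟩ := h2i.isGreedyChain.of_mem_chainSet hV
  exact ⟨hV2, mem_of_free_of_onComp hij hei hej hiX hjX (hfree V hV) hiV, hkV, hbV⟩

lemma mem_or_mem_of_cond23 (hij : i ≠ j) (hei : G.onComp e i) (hej : G.onComp e j)
    (h2i : G.IsNested2 i k M2i W2i) (h2j : G.IsNested2 j k M2j W2j)
    (hX : G.cond23 i k (G.chainSet M2i W2i) X) (hY : G.cond23 j k (G.chainSet M2j W2j) Y) :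
    j ∈ X ∨ i ∈ Y := by
  by_contra! hsep
  obtain ⟨hjX, hiY⟩ := hsep
  have hjoin : e ∈ G.nodesBetween (X \ Y) (Y \ X) :=
    mem_nodesBetween_of_onComp hij hei hej (mem_sdiff.mpr ⟨hX.left_mem, hiY⟩)
      (mem_sdiff.mpr ⟨hY.left_mem, hjX⟩)
  obtain ⟨hkX, hkY, hunion⟩ := hX.isTail.isKTail_union_of_k_le_three hY.isTail
    ⟨k, mem_inter.mpr ⟨hX.right_mem, hY.right_mem⟩⟩
    ⟨G.base, by simp [hX.base_notMem, hY.base_notMem]⟩ ⟨e, hjoin⟩ hX.k_le_three hY.k_le_three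
  have hfreeX := hX.free_of_k_eq_three hkX
  have hfreeY := hY.free_of_k_eq_three hkY
  have hT2 : G.chainSet M2i W2i ⊆ G.chainSet M2j W2j :=
    h2i.isGreedyChain.chainSet_subset h2j.isGreedyChain (infClosed_cond2 i k)
      (infClosed_cond2 j k) (fun _ => cond2.Term_nonempty) (fun _ => cond2.Term_nonempty)
      (cond2_of_mem_chainSet_of_free hij hei hej h2i hX.left_mem hjX hfreeX)
      (cond2_of_mem_chainSet_of_free hij.symm hej hei h2j hY.left_mem hiY hfreeY)
  have hcond : G.cond2 i k (X ∪ Y) :=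
    ⟨hunion, mem_union_left Y hX.left_mem, mem_union_left Y hX.right_mem,
      by simp [hX.base_notMem, hY.base_notMem]⟩
  obtain ⟨V, hV, hnfree⟩ := h2i.isGreedyChain.exists_not_free (infClosed_cond2 i k)
    (fun _ => cond2.Term_nonempty) hcond
  exact hnfree (free.union_right (hfreeX V hV).symm (hfreeY V (hT2 hV)).symm)

lemma eq_of_pairwise_free {T : Set (Finset G.V)} (hij : i ≠ j) (hei : G.onComp e i)
    (hej : G.onComp e j) (hT : T.Pairwise G.free) (hX : X ∈ T) (hY : Y ∈ T) (hiX : i ∈ X)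
    (hiY : i ∈ Y) (hjX : j ∉ X) (hjY : j ∉ Y) : X = Y :=
  hT.eq hX hY fun hfree => hjY (mem_of_free_of_onComp hij hei hej hiX hjX hfree hiY)

end Meet

end NodalGraph

open NodalGraph in
theorem at_most_one_tail_terminating_in_meet_general {G : NodalGraph} {i j k : G.V} (hij : i ≠ j)
    {M2i M2j : ℕ} {W2i W2j : ℕ → Finset G.V}
    (h2i : G.IsNested2 i k M2i W2i) (h2j : G.IsNested2 j k M2j W2j)
    {Ti Tj : Set (Finset G.V)}
    (hTi : ∀ Z ∈ Ti, G.cond23 i k (G.chainSet M2i W2i) Z) (hTi_free : Ti.Pairwise G.free)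
    (hTj : ∀ Z ∈ Tj, G.cond23 j k (G.chainSet M2j W2j) Z) (hTj_free : Tj.Pairwise G.free) :
    {Z ∈ Ti ∪ Tj | ∃ e, G.onComp e i ∧ G.onComp e j ∧ e ∈ G.Term Z}.Subsingleton := by
  have separates : ∀ Z ∈ Ti ∪ Tj, (∃ e, G.onComp e i ∧ G.onComp e j ∧ e ∈ G.Term Z) →
      (Z ∈ Ti ∧ i ∈ Z ∧ j ∉ Z) ∨ (Z ∈ Tj ∧ j ∈ Z ∧ i ∉ Z) := by
    rintro Z (hZ | hZ) ⟨e, hei, hej, he⟩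
    · have hi : i ∈ Z := (hTi Z hZ).left_mem
      exact Or.inl ⟨hZ, hi, (mem_Term_iff_of_onComp hij hei hej hi).mp he⟩
    · have hj : j ∈ Z := (hTj Z hZ).left_mem
      exact Or.inr ⟨hZ, hj, (mem_Term_iff_of_onComp hij.symm hej hei hj).mp he⟩
  rintro X ⟨hXT, hX⟩ Y ⟨hYT, hY⟩
  have ⟨e, hei, hej, _⟩ := hX
  have not_opposite : ∀ {V Z}, V ∈ Ti → Z ∈ Tj → j ∉ V → i ∉ Z → X = Y := fun hV hZ hjV hiZ =>
    ((mem_or_mem_of_cond23 hij hei hej h2i h2j (hTi _ hV) (hTj _ hZ)).elim hjV hiZ).elim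
  rcases separates X hXT hX with ⟨hXi, hiX, hjX⟩ | ⟨hXj, hjX, hiX⟩ <;>
    rcases separates Y hYT hY with ⟨hYi, hiY, hjY⟩ | ⟨hYj, hjY, hiY⟩
  · exact eq_of_pairwise_free hij hei hej hTi_free hXi hYi hiX hiY hjX hjY
  · exact not_opposite hXi hYj hjX hiY
  · exact not_opposite hYi hXj hjY hiX
  · exact eq_of_pairwise_free hij.symm hej hei hTj_free hXj hYj hjX hjY hiX hiY

open scoped Classical in
/-- inequality (14) of Proposition 3.1: at most one tail in
`T²_{i,k} ∪ T²_{j,k} ∪ T³_{i,k} ∪ T³_{j,k}` has a terminal point in `C_i ∩ C_j`. -/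
theorem at_most_one_tail_terminating_in_meet
    (G : NodalGraph) (hconn : G.Connected) (i j k : G.V)
    (hij : i ≠ j) (hmeet : ∃ e, G.onComp e i ∧ G.onComp e j)
    (M2i M2j M3i M3j : ℕ) (W2i W2j W3i W3j : ℕ → Finset G.V)
    (h2i : G.IsNested2 i k M2i W2i) (h2j : G.IsNested2 j k M2j W2j)
    (h3i : G.IsNested3 i k (G.chainSet M2i W2i) M3i W3i)
    (h3j : G.IsNested3 j k (G.chainSet M2j W2j) M3j W3j) :
    ((((Finset.range M2i).image W2i ∪ (Finset.range M2j).image W2j ∪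
        (Finset.range M3i).image W3i ∪ (Finset.range M3j).image W3j).filter
      (fun Wt => ∃ e, G.onComp e i ∧ G.onComp e j ∧ e ∈ G.Term Wt)).card) ≤ 1 := by
  rw [card_le_one_iff_subsingleton]
  refine (at_most_one_tail_terminating_in_meet_general hij h2i h2j (h2i.cond23_of_mem h3i)
    (h2i.pairwise_free_union h3i) (h2j.cond23_of_mem h3j) (h2j.pairwise_free_union h3j)).anti
    fun Z hZ => ?_
  simp only [coe_filter, mem_union, mem_image, mem_range] at hZ
  exact ⟨or_or_or_comm.mp (or_assoc.mp hZ.1), hZ.2⟩
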